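/- Let σ > 0 and λ_U > 0, let A ∈ ℝ^{m×n}, let U ∈ ℝ^{n×n} be symmetric with λ_U·I_n − U² positive semidefinite, let z⁰, z̄ ∈ ℝ^m, let w⁰, v̄, x ∈ ℝ^n, set x̄ := x − σ·(Aᵀz⁰ + Uᵀw⁰ + v̄), and set w½ := w⁰ + (1/(σ·λ_U))·U·(2x̄ − x). Then w̄ := w½ + (1/λ_U)·U·Aᵀ·(z⁰ − z̄) is the unique minimizer over ℝ^n of the function w ↦ −⟨x̄, Uᵀw⟩ + (σ/2)‖Aᵀz̄ + Uᵀw + v̄‖² + (σ/2)⟨w − w⁰, (λ_U·I_n − U²)(w − w⁰)⟩. -/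

import Mathlib

/-!
The quadratic term `-(σ / 2) * ‖U (w - w0)‖ ^ 2` of the proximal part cancels the quadratic term of
the penalty, so the Hessian of the objective is the scalar matrix `σ * lU`, and stationarity reads
`σ * lU * (w - w0) = U (xbar - σ (Aᵀ zbar + U w0 + vbar))`. The point `wbar` solves this equation,
since `2 * xbar - x = xbar - σ (Aᵀ z0 + U w0 + vbar)`. Completing the square
(`objective_eq_add_sq`) then gives `F w = F wbar + σ * lU / 2 * ‖w - wbar‖ ^ 2`, from which both
minimality and uniqueness follow.
-/

open Matrix

noncomputable section

/-- Euclidean norm on `Fin d → ℝ`, `‖x‖ = √⟨x,x⟩`. -/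
def euclNorm {d : ℕ} (x : Fin d → ℝ) : ℝ := Real.sqrt (x ⬝ᵥ x)

lemma euclNorm_sq {d : ℕ} (x : Fin d → ℝ) : euclNorm x ^ 2 = x ⬝ᵥ x :=
  Real.sq_sqrt (by simpa using dotProduct_star_self_nonneg x)

/-- Completing the square: `c` is a stationary point of the objective with linear coefficient `p`
and penalty offsets `a`, `v`, whose Hessian is `σ * l` times the identity. -/
lemma objective_eq_add_sq {n : ℕ} (σ l : ℝ) (U : Matrix (Fin n) (Fin n) ℝ) (hU : Uᵀ = U)
    (p a v w0 c w : Fin n → ℝ)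
    (hc : (σ * l) • (c - w0) = U *ᵥ (p - σ • (a + U *ᵥ w0 + v))) :
    -(p ⬝ᵥ (U *ᵥ w)) + σ / 2 * euclNorm (a + U *ᵥ w + v) ^ 2 +
        σ / 2 * ((w - w0) ⬝ᵥ ((l • (1 : Matrix (Fin n) (Fin n) ℝ) - U * U) *ᵥ (w - w0))) =
      -(p ⬝ᵥ (U *ᵥ c)) + σ / 2 * euclNorm (a + U *ᵥ c + v) ^ 2 +
        σ / 2 * ((c - w0) ⬝ᵥ ((l • (1 : Matrix (Fin n) (Fin n) ℝ) - U * U) *ᵥ (c - w0))) +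
      σ * l / 2 * ((w - c) ⬝ᵥ (w - c)) := by
  have sym (y z : Fin n → ℝ) : (U *ᵥ y) ⬝ᵥ z = y ⬝ᵥ (U *ᵥ z) := by
    rw [dotProduct_mulVec, ← mulVec_transpose, hU]
  have prox (y : Fin n → ℝ) :
      y ⬝ᵥ ((l • (1 : Matrix (Fin n) (Fin n) ℝ) - U * U) *ᵥ y) =
        l * (y ⬝ᵥ y) - (U *ᵥ y) ⬝ᵥ (U *ᵥ y) := by
    rw [sub_mulVec, smul_mulVec, one_mulVec, dotProduct_sub, dotProduct_smul, smul_eq_mul,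
      ← mulVec_mulVec, sym]
  have stat := congrArg (fun y => y ⬝ᵥ (w - c)) hc
  simp only [sym] at stat
  obtain ⟨d, rfl⟩ : ∃ d, w = w0 + (c - w0) + d := ⟨w - c, by abel⟩
  obtain ⟨e, rfl⟩ : ∃ e, c = w0 + e := ⟨c - w0, by abel⟩
  have h1 : w0 + (w0 + e - w0) + d = w0 + e + d := by abel
  have h2 : w0 + e + d - (w0 + e) = d := by abel
  have h3 : w0 + e - w0 = e := by abel
  have h4 : w0 + e + d - w0 = e + d := by abel
  rw [h1, h2, h3] at stat
  rw [h1, prox, prox, euclNorm_sq, euclNorm_sq, h2, h3, h4]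
  simp only [mulVec_add, add_dotProduct, dotProduct_add, smul_dotProduct, sub_dotProduct,
    smul_eq_mul] at stat ⊢
  rw [dotProduct_comm d e, dotProduct_comm (U *ᵥ d) a, dotProduct_comm (U *ᵥ d) v,
    dotProduct_comm (U *ᵥ d) (U *ᵥ w0), dotProduct_comm (U *ᵥ d) (U *ᵥ e)]
  linear_combination stat

/-- **Closed-form second `w`-update (equation (27) of the paper).** -/
theorem w_bar_update_closed_form
    (m n : ℕ) (σ lU : ℝ) (hσ : 0 < σ) (hlU : 0 < lU)
    (A : Matrix (Fin m) (Fin n) ℝ)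
    (U : Matrix (Fin n) (Fin n) ℝ) (hUsym : Uᵀ = U)
    (hpsd : ∀ y : Fin n → ℝ,
      0 ≤ y ⬝ᵥ ((lU • (1 : Matrix (Fin n) (Fin n) ℝ) - U * U) *ᵥ y))
    (z0 zbar : Fin m → ℝ) (w0 vbar x : Fin n → ℝ) :
    let xbar : Fin n → ℝ := x - σ • (Aᵀ *ᵥ z0 + Uᵀ *ᵥ w0 + vbar)
    let wh : Fin n → ℝ := w0 + (σ * lU)⁻¹ • (U *ᵥ ((2 : ℝ) • xbar - x))
    let wbar : Fin n → ℝ := wh + lU⁻¹ • (U *ᵥ (Aᵀ *ᵥ (z0 - zbar)))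
    let F : (Fin n → ℝ) → ℝ := fun w =>
      -(xbar ⬝ᵥ (Uᵀ *ᵥ w)) + σ / 2 * euclNorm (Aᵀ *ᵥ zbar + Uᵀ *ᵥ w + vbar) ^ 2 +
        σ / 2 * ((w - w0) ⬝ᵥ ((lU • (1 : Matrix (Fin n) (Fin n) ℝ) - U * U) *ᵥ (w - w0)))
    -- `wbar` is the unique minimizer of `F`
    (∀ w : Fin n → ℝ, F wbar ≤ F w) ∧
      ∀ w' : Fin n → ℝ, (∀ w : Fin n → ℝ, F w' ≤ F w) → w' = wbar := by
  intro xbar wh wbar F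
  have hstat : (σ * lU) • (wbar - w0) =
      U *ᵥ (xbar - σ • (Aᵀ *ᵥ zbar + U *ᵥ w0 + vbar)) := by
    have hx : (2 : ℝ) • xbar - x + σ • (Aᵀ *ᵥ (z0 - zbar)) =
        xbar - σ • (Aᵀ *ᵥ zbar + U *ᵥ w0 + vbar) := by
      simp only [xbar, hUsym, mulVec_sub]
      module
    have hw : wbar - w0 = (σ * lU)⁻¹ • (U *ᵥ ((2 : ℝ) • xbar - x)) +
        lU⁻¹ • (U *ᵥ (Aᵀ *ᵥ (z0 - zbar))) := by
      simp only [wbar, wh]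
      abel
    rw [← hx, hw, mulVec_add, mulVec_smul, smul_add, smul_smul, smul_smul,
      mul_inv_cancel₀ (mul_pos hσ hlU).ne', mul_assoc, mul_inv_cancel₀ hlU.ne', one_smul, mul_one]
  have hF (w : Fin n → ℝ) :
      F w = F wbar + σ * lU / 2 * ((w - wbar) ⬝ᵥ (w - wbar)) := by
    simp only [F, hUsym]
    exact objective_eq_add_sq σ lU U hUsym xbar _ vbar w0 wbar w hstat
  have hpos : 0 < σ * lU / 2 := by positivity
  have hnn (y : Fin n → ℝ) : 0 ≤ y ⬝ᵥ y := by simpa using dotProduct_star_self_nonneg y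
  refine ⟨fun w => ?_, fun w' hw' => ?_⟩
  · rw [hF w]
    exact le_add_of_nonneg_right (mul_nonneg hpos.le (hnn _))
  · have h := hw' wbar
    rw [hF w'] at h
    have h0 : (w' - wbar) ⬝ᵥ (w' - wbar) = 0 := by
      have := hnn (w' - wbar)
      nlinarith
    exact sub_eq_zero.mp (dotProduct_self_eq_zero.mp h0)
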